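/- arXiv:1701.07492 — 13 statements merged into one kernel-verified Lean document; each statement's English description precedes it below -/
import Mathlib

section
/- Let D be a digraph on vertex type V and let u, v, w be distinct vertices. If there is a path in D from u to w, then there is a path from u to w in the detour D↑v, and also a path from u to w in the bypass D↑↑v (the induced subdigraph of D↑v on V \ {v}). -/
/-- The detour of a digraph (irreflexive relation) `A` at a vertex `v`: no arcs into or
out of `v`; for `x ≠ y` both distinct from `v`, an arc `x → y` iff `A x y`, or
`A x v` and `A v y`. -/
def detour {V : Type*} (A : V → V → Prop) (v : V) : V → V → Prop :=
  fun x y => x ≠ v ∧ y ≠ v ∧ x ≠ y ∧ (A x y ∨ (A x v ∧ A v y))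

/-- The bypass of `A` at `v`: the induced subdigraph of `detour A v` on `V \ {v}`. -/
def bypass {V : Type*} (A : V → V → Prop) (v : V) :
    {x : V // x ≠ v} → {x : V // x ≠ v} → Prop :=
  fun x y => detour A v x.val y.val

/-- If `u`, `v`, `w` are distinct and there is a path in `D` from `u` to `w`, then there
are paths from `u` to `w` in both the detour `D↑v` and the bypass `D↑↑v`. -/
theorem path_detour_bypass {V : Type*} (A : V → V → Prop) (hA : Irreflexive A)
    (u v w : V) (huv : u ≠ v) (hvw : v ≠ w) (huw : u ≠ w)
    (h : Relation.ReflTransGen A u w) :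
    Relation.ReflTransGen (detour A v) u w ∧
      Relation.ReflTransGen (bypass A v) ⟨u, huv⟩ ⟨w, Ne.symm hvw⟩ := by
  have key : ∀ y, Relation.ReflTransGen A u y →
      (∀ hy : y ≠ v, Relation.ReflTransGen (bypass A v) ⟨u, huv⟩ ⟨y, hy⟩) ∧
      (y = v → ∃ x, ∃ hx : x ≠ v,
        Relation.ReflTransGen (bypass A v) ⟨u, huv⟩ ⟨x, hx⟩ ∧ A x v) := by
    intro y hy
    induction hy with
    | refl => exact ⟨fun _ => Relation.ReflTransGen.refl, fun e => absurd e huv⟩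
    | @tail b c _ hbc ih =>
      obtain ⟨ih1, ih2⟩ := ih
      refine ⟨fun hc => ?_, fun hc => ?_⟩
      · by_cases hb : b = v
        · obtain ⟨x, hx, hr, hxv⟩ := ih2 hb
          subst hb
          by_cases hxc : x = c
          · subst hxc
            exact hr
          · exact hr.tail ⟨hx, hc, hxc, Or.inr ⟨hxv, hbc⟩⟩
        · by_cases hbc' : b = c
          · subst hbc'
            exact ih1 hb
          · exact (ih1 hb).tail ⟨hb, hc, hbc', Or.inl hbc⟩
      · subst hc
        have hb : b ≠ c := fun e => hA c (by rw [e] at hbc; exact hbc)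
        exact ⟨b, hb, ih1 hb, hbc⟩
  have h2 := (key w h).1 (Ne.symm hvw)
  exact ⟨Relation.ReflTransGen.lift (r := bypass A v) (p := detour A v) Subtype.val (fun _ _ hab => hab) _ _ h2, h2⟩
end

section
/- Let D be a digraph on vertex type V and v ∈ V a vertex having at least one predecessor (some x ≠ v with Adj_D x v) and at least one successor (some y ≠ v with Adj_D v y). If the bypass D↑↑v is strongly connected (for all x, y in V \ {v} there is a path in D↑↑v from x to y), then D is strongly connected (for all x, y in V there is a path in D from x to y). -/
/-- If `v` has a predecessor and a successor and the bypass `D↑↑v` is strongly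
connected, then `D` is strongly connected. -/
theorem strongly_connected_of_bypass {V : Type*} (A : V → V → Prop) (hA : Irreflexive A)
    (v : V)
    (hpred : ∃ x, x ≠ v ∧ A x v) (hsucc : ∃ y, y ≠ v ∧ A v y)
    (hsc : ∀ x y : {z : V // z ≠ v}, Relation.ReflTransGen (bypass A v) x y) :
    ∀ x y : V, Relation.ReflTransGen A x y := by
  obtain ⟨p, hp, hpv⟩ := hpred
  obtain ⟨s, hs, hvs⟩ := hsucc
  have key : ∀ x y : {z : V // z ≠ v}, Relation.ReflTransGen A x.val y.val := by
    intro x y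
    induction hsc x y with
    | refl => exact Relation.ReflTransGen.refl
    | tail _ h ih =>
      obtain ⟨_, _, _, h | ⟨h1, h2⟩⟩ := h
      · exact ih.tail h
      · exact (ih.tail h1).tail h2
  have toV : ∀ x : V, Relation.ReflTransGen A x v := by
    intro x
    by_cases hx : x = v
    · rw [hx]
    · exact (key ⟨x, hx⟩ ⟨p, hp⟩).tail hpv
  have fromV : ∀ y : V, Relation.ReflTransGen A v y := by
    intro y
    by_cases hy : y = v
    · rw [hy]
    · exact Relation.ReflTransGen.head hvs (key ⟨s, hs⟩ ⟨y, hy⟩)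
  exact fun x y => (toV x).trans (fromV y)
end

section
/- Let D be a digraph on vertex type V and v ∈ V. If D is acyclic, then the detour D↑v is acyclic, and the bypass D↑↑v is acyclic. -/
/-- If `D` is acyclic, then so are the detour `D↑v` and the bypass `D↑↑v`. -/
theorem detour_bypass_acyclic {V : Type*} (A : V → V → Prop) (hA : Irreflexive A)
    (hacyc : Irreflexive (Relation.TransGen A)) (v : V) :
    Irreflexive (Relation.TransGen (detour A v)) ∧
      Irreflexive (Relation.TransGen (bypass A v)) := by
  have key : ∀ x y, detour A v x y → Relation.TransGen A x y := by
    rintro x y ⟨_, _, _, h | ⟨h₁, h₂⟩⟩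
    · exact .single h
    · exact (Relation.TransGen.single h₁).tail h₂
  have key2 : ∀ x y, Relation.TransGen (detour A v) x y → Relation.TransGen A x y := by
    intro x y h
    induction h with
    | single h => exact key _ _ h
    | tail _ h ih => exact ih.trans (key _ _ h)
  have key3 : ∀ x y, Relation.TransGen (bypass A v) x y →
      Relation.TransGen (detour A v) x.val y.val := by
    intro x y h
    induction h with
    | single h => exact .single h
    | tail _ h ih => exact ih.tail h
  exact ⟨fun x h => hacyc x (key2 x x h), fun x h => hacyc x.val (key2 _ _ (key3 x x h))⟩
end

section
/- Let D be a digraph on vertex type V and let v, w ∈ V. Then the detour operations commute: (D↑v)↑w = (D↑w)↑v, i.e., the two digraphs have exactly the same arcs. -/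
/-- Detour operations on a digraph commute: `(D↑v)↑w = (D↑w)↑v`. -/
theorem detour_comm {V : Type*} (A : V → V → Prop) (hA : Irreflexive A) (v w : V) :
    detour (detour A v) w = detour (detour A w) v := by
  rcases eq_or_ne v w with rfl | hvw
  · rfl
  · have hwv := hvw.symm
    funext x y
    apply propext
    simp only [detour]
    constructor <;> rintro ⟨h1, h2, h3, h4⟩ <;> grind
end

section
/- Let D be a digraph on vertex type V, U a finite set of vertices enumerated by a duplicate-free list l, and D↑U the iterated detour of D over l. If v, w ∉ U are distinct and there is a path in D from v to w, then there is a path from v to w in D↑U, and also a path from v to w in the bypass D↑↑U (the induced subdigraph of D↑U on V \ U). -/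
theorem detour_path_aux {V : Type*} (A : V → V → Prop) (u v w : V) (hv : v ≠ u)
    (h : Relation.ReflTransGen A v w) :
    (w ≠ u → Relation.ReflTransGen (detour A u) v w) ∧
    (w = u → ∃ x, x ≠ u ∧ Relation.ReflTransGen (detour A u) v x ∧ A x u) := by
  induction h with
  | refl => exact ⟨fun _ => .refl, fun h => absurd h hv⟩
  | @tail b c _ hbc ih =>
    refine ⟨fun hc => ?_, fun hc => ?_⟩
    · by_cases hb : b = u
      · obtain ⟨x, hx, hp, hxu⟩ := ih.2 hb
        subst hb
        by_cases hxc : x = c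
        · exact hxc ▸ hp
        · exact hp.tail ⟨hx, hc, hxc, Or.inr ⟨hxu, hbc⟩⟩
      · by_cases hxc : b = c
        · exact hxc ▸ ih.1 hb
        · exact (ih.1 hb).tail ⟨hb, hc, hxc, Or.inl hbc⟩
    · by_cases hb : b = u
      · exact ih.2 hb
      · exact ⟨b, hb, ih.1 hb, hc ▸ hbc⟩

theorem foldl_detour_path {V : Type*} (l : List V) (v w : V) (hv : v ∉ l) (hw : w ∉ l) :
    ∀ (A : V → V → Prop), Relation.ReflTransGen A v w →
      Relation.ReflTransGen (List.foldl detour A l) v w := by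
  induction l with
  | nil => exact fun A h => h
  | cons u l ih =>
    intro A h
    simp only [List.mem_cons, not_or] at hv hw
    exact ih hv.2 hw.2 _ ((detour_path_aux A u v w hv.1 h).1 hw.1)

theorem foldl_detour_notMem {V : Type*} (A : V → V → Prop) (l : List V) :
    ∀ x y, List.foldl detour A l x y → x ∉ l ∧ y ∉ l := by
  induction l using List.reverseRecOn with
  | nil => simp
  | append_singleton l u ih =>
    intro x y h
    rw [List.foldl_append] at h
    obtain ⟨hx, hy, _, h⟩ := h
    have : x ∉ l ∧ y ∉ l := by
      rcases h with h | ⟨h1, h2⟩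
      · exact ih _ _ h
      · exact ⟨(ih _ _ h1).1, (ih _ _ h2).2⟩
    simp [this.1, this.2, hx, hy]

/-- If `U` is a finite set of vertices (enumerated by a duplicate-free list `l`),
`v, w ∉ U` are distinct, and there is a path in `D` from `v` to `w`, then there are
paths from `v` to `w` in the iterated detour `D↑U` and in the bypass `D↑↑U`
(the induced subdigraph of `D↑U` on `V \ U`). -/
theorem path_detour_bypass_set {V : Type*} [DecidableEq V]
    (A : V → V → Prop) (hA : Irreflexive A)
    (U : Finset V) (l : List V) (hl : l.Nodup) (hmem : ∀ x, x ∈ l ↔ x ∈ U)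
    (v w : V) (hv : v ∉ U) (hw : w ∉ U) (hvw : v ≠ w)
    (h : Relation.ReflTransGen A v w) :
    Relation.ReflTransGen (List.foldl detour A l) v w ∧
      Relation.ReflTransGen
        (fun (x y : {z : V // z ∉ U}) => List.foldl detour A l x.val y.val)
        ⟨v, hv⟩ ⟨w, hw⟩ := by
  have key := foldl_detour_path l v w (by rwa [hmem]) (by rwa [hmem]) A h
  refine ⟨key, ?_⟩
  clear h hvw
  induction key with
  | refl => exact .refl
  | @tail b c _ hbc ih =>
    have hb : b ∉ U := by
      rw [← hmem]
      exact (foldl_detour_notMem A l b c hbc).1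
    exact (ih hb).tail hbc
end

section
/- Let D be a digraph on vertex type V and U a finite set of vertices enumerated by a duplicate-free list l. If D is acyclic, then the iterated detour D↑U is acyclic, and the bypass D↑↑U (the induced subdigraph of D↑U on V \ U) is acyclic. -/
theorem detour_foldl_sub {V : Type*} (l : List V) : ∀ (A : V → V → Prop) (x y : V),
    List.foldl detour A l x y → Relation.TransGen A x y := by
  induction l with
  | nil => intro A x y h; exact Relation.TransGen.single h
  | cons v l ih =>
    intro A x y h
    have h1 := ih (detour A v) x y h
    clear h
    have step : ∀ a b, detour A v a b → Relation.TransGen A a b := by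
      rintro a b ⟨_, _, _, h | ⟨h, hb⟩⟩
      · exact Relation.TransGen.single h
      · exact (Relation.TransGen.single h).tail hb
    induction h1 with
    | single h => exact step _ _ h
    | tail _ h ihh => exact ihh.trans (step _ _ h)

/-- If `D` is acyclic, then so are the iterated detour `D↑U` (over a duplicate-free
enumeration `l` of the finite set `U`) and the bypass `D↑↑U` (the induced subdigraph
of `D↑U` on `V \ U`). -/
theorem detour_bypass_set_acyclic {V : Type*} [DecidableEq V]
    (A : V → V → Prop) (hA : Irreflexive A)
    (hacyc : Irreflexive (Relation.TransGen A))
    (U : Finset V) (l : List V) (hl : l.Nodup) (hmem : ∀ x, x ∈ l ↔ x ∈ U) :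
    Irreflexive (Relation.TransGen (List.foldl detour A l)) ∧
      Irreflexive (Relation.TransGen
        (fun (x y : {z : V // z ∉ U}) => List.foldl detour A l x.val y.val)) := by
  have key : ∀ x y, Relation.TransGen (List.foldl detour A l) x y →
      Relation.TransGen A x y := by
    intro x y h
    induction h with
    | single h => exact detour_foldl_sub l A _ _ h
    | tail _ h ih => exact ih.trans (detour_foldl_sub l A _ _ h)
  have first : ∀ x, ¬ Relation.TransGen (List.foldl detour A l) x x :=
    fun x h => hacyc x (key x x h)
  refine ⟨first, fun x h => first x.val ?_⟩
  exact Relation.TransGen.lift Subtype.val (fun _ _ h => h) _ _ h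
end

section
/- Let D be a digraph on vertex type V and let u, v, w ∈ V be distinct. Then contracting {v,w} commutes with the detour at u: the digraph (D↑u)/{v,w} equals the digraph (D/{v,w})↑u; both are digraphs on V \ {w} with identical arcs. -/
/-- The contraction `D/{v,w}` of a digraph `A` at two distinct vertices `v, w`:
the digraph on `V \ {w}` obtained by identifying `w` with `v`. -/
def contractPair {V : Type*} [DecidableEq V] (A : V → V → Prop) (v w : V) :
    {x : V // x ≠ w} → {x : V // x ≠ w} → Prop :=
  fun x y =>
    if x.val = v then
      if y.val = v then False else A v y.val ∨ A w y.val
    else if y.val = v then A x.val v ∨ A x.val w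
    else A x.val y.val

/-- Contracting `{v,w}` commutes with the detour at `u`:
`(D↑u)/{v,w} = (D/{v,w})↑u` as digraphs on `V \ {w}`. -/
theorem contract_detour_comm {V : Type*} [DecidableEq V]
    (A : V → V → Prop) (hA : Irreflexive A)
    (u v w : V) (huv : u ≠ v) (hvw : v ≠ w) (huw : u ≠ w) :
    contractPair (detour A u) v w = detour (contractPair A v w) ⟨u, huw⟩ := by
  funext ⟨x, hx⟩ ⟨y, hy⟩
  have huv' := huv.symm
  have huw' := huw.symm
  by_cases h1 : x = v <;> by_cases h2 : y = v <;>
    simp only [contractPair, detour, ne_eq, Subtype.mk.injEq, h1, h2, huv, if_true, if_false,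
      eq_iff_iff] <;> grind
end

section
/- Let D be a digraph on vertex type V, U a finite set of vertices enumerated by a duplicate-free list l, and D↑U the iterated detour of D over l. If x_0, x_1, …, x_k is a directed path in D (Adj_D x_i x_{i+1} for all i, with all vertices x_0, …, x_k distinct) such that x_0 ∉ U and x_k ∉ U, then the subsequence obtained by deleting from x_0, …, x_k all vertices belonging to U is a directed path in D↑U from x_0 to x_k. -/
theorem detour_step {V : Type*} [DecidableEq V] (A : V → V → Prop) (v : V) :
    ∀ (c : List V), c.IsChain A → c.Nodup →
      (c.filter (fun x => decide (x ≠ v))).IsChain (detour A v)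
  | [], _, _ => by simp
  | [a], _, _ => by
    by_cases h : a = v <;> simp [h]
  | [a, b], h1, h2 => by
    by_cases h : a = v <;> by_cases h' : b = v <;>
      simp_all [detour]
  | a :: b :: d :: t, h1, h2 => by
    have ih1 := detour_step A v (b :: d :: t) h1.tail h2.tail
    have ih2 := detour_step A v (d :: t) h1.tail.tail h2.tail.tail
    simp only [List.isChain_cons_cons] at h1
    obtain ⟨hab, hbd, _⟩ := h1
    simp only [List.nodup_cons, List.mem_cons, not_or] at h2
    by_cases h : a = v
    · rw [List.filter_cons_of_neg (by simpa using h)]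
      exact ih1
    · by_cases h' : b = v
      · have hd : d ≠ v := fun e => h2.2.1.1 (h'.trans e.symm)
        rw [List.filter_cons_of_pos (by simpa using h),
          List.filter_cons_of_neg (by simpa using h')]
        rw [List.filter_cons_of_pos (by simpa using hd)] at ih2 ⊢
        refine List.isChain_cons_cons.2 ⟨⟨h, hd, h2.1.2.1, Or.inr ?_⟩, ih2⟩
        subst h'
        exact ⟨hab, hbd⟩
      · rw [List.filter_cons_of_pos (by simpa using h)]
        rw [List.filter_cons_of_pos (by simpa using h')] at ih1 ⊢
        exact List.isChain_cons_cons.2 ⟨⟨h, h', h2.1.1, Or.inl hab⟩, ih1⟩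

theorem detour_iter {V : Type*} [DecidableEq V] (l : List V) :
    ∀ (A : V → V → Prop) (c : List V), c.IsChain A → c.Nodup →
      (c.filter (fun x => decide (x ∉ l))).IsChain (List.foldl detour A l) := by
  induction l with
  | nil => intro A c h _; simpa using h
  | cons v l ih =>
    intro A c h1 h2
    have := ih (detour A v) _ (detour_step A v c h1 h2) (h2.filter _)
    rw [List.filter_filter] at this
    rw [List.foldl_cons]
    convert this using 2
    funext x
    simp [Bool.and_comm]

/-- Given a directed path `x_0, …, x_k` in `D` (recorded as a duplicate-free list `c`
whose consecutive entries are arcs of `D`) with `x_0, x_k ∉ U`, the subsequence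
obtained by deleting all vertices belonging to `U` is a directed path in the iterated
detour `D↑U` from `x_0` to `x_k`. -/
theorem detour_path_deletion {V : Type*} [DecidableEq V]
    (A : V → V → Prop) (hA : Irreflexive A)
    (U : Finset V) (l : List V) (hl : l.Nodup) (hmem : ∀ x, x ∈ l ↔ x ∈ U)
    (c : List V) (hchain : c.Chain' A) (hnodup : c.Nodup)
    (x0 xk : V) (hhead : c.head? = some x0) (hlast : c.getLast? = some xk)
    (hx0 : x0 ∉ U) (hxk : xk ∉ U) :
    (c.filter (fun x => decide (x ∉ U))).Chain' (List.foldl detour A l) ∧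
      (c.filter (fun x => decide (x ∉ U))).head? = some x0 ∧
      (c.filter (fun x => decide (x ∉ U))).getLast? = some xk := by
  refine ⟨?_, ?_, ?_⟩
  · have := detour_iter l A c hchain hnodup
    simp only [hmem] at this
    exact this
  · cases c with
    | nil => simp at hhead
    | cons a t =>
      simp only [List.head?_cons, Option.some.injEq] at hhead
      subst hhead
      rw [List.filter_cons_of_pos (by simpa using hx0)]
      rfl
  · obtain ⟨t, rfl⟩ := List.getLast?_eq_some_iff.1 hlast
    rw [List.filter_append, List.filter_cons_of_pos (by simpa using hxk)]
    simp
end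

section
/- Let V be a type and μ : V → V → ℕ a matrix with zero diagonal (a directed multigraph), and let v, w ∈ V with v ≠ w. Then (μ↑v)↑w ≠ (μ↑w)↑v if and only if μ v w · μ w v ≠ 0 and there exist x, y ∈ V with x ≠ y and x, y ∉ {v, w} such that μ x v · μ v y ≠ μ x w · μ w y. -/
/-- The detour of a directed multigraph `μ : V → V → ℕ` (a matrix with zero diagonal,
counting arcs) at a vertex `v`. -/
def mdetour {V : Type*} [DecidableEq V] (μ : V → V → ℕ) (v : V) : V → V → ℕ :=
  fun x y => if x = v ∨ y = v ∨ x = y then 0 else μ x y + μ x v * μ v y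

theorem mdetour_aux_zero {V : Type*} [DecidableEq V] (μ : V → V → ℕ) (v w x y : V)
    (h : x = y ∨ x = v ∨ x = w ∨ y = v ∨ y = w) : mdetour (mdetour μ v) w x y = 0 := by
  unfold mdetour
  rcases h with h | h | h | h | h <;> subst h <;> simp

theorem mdetour_aux_main {V : Type*} [DecidableEq V] (μ : V → V → ℕ) (v w x y : V)
    (hvw : v ≠ w) (h : x ≠ y) (h1 : x ≠ v) (h2 : x ≠ w) (h3 : y ≠ v) (h4 : y ≠ w) :
    mdetour (mdetour μ v) w x y =
      μ x y + μ x v * μ v y + (μ x w + μ x v * μ v w) * (μ w y + μ w v * μ v y) := by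
  simp [mdetour, h, h1, h2, h3, h4, hvw.symm, h4.symm]

/-- For a directed multigraph, `(μ↑v)↑w ≠ (μ↑w)↑v` iff `μ v w · μ w v ≠ 0` and there
exist `x ≠ y` outside `{v, w}` with `μ x v · μ v y ≠ μ x w · μ w y`. -/
theorem multigraph_detour_noncomm_iff {V : Type*} [DecidableEq V]
    (μ : V → V → ℕ) (hdiag : ∀ x, μ x x = 0) (v w : V) (hvw : v ≠ w) :
    mdetour (mdetour μ v) w ≠ mdetour (mdetour μ w) v ↔
      μ v w * μ w v ≠ 0 ∧
        ∃ x y, x ≠ y ∧ x ≠ v ∧ x ≠ w ∧ y ≠ v ∧ y ≠ w ∧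
          μ x v * μ v y ≠ μ x w * μ w y := by
  have key : ∀ x y, x ≠ y → x ≠ v → x ≠ w → y ≠ v → y ≠ w →
      (mdetour (mdetour μ v) w x y = mdetour (mdetour μ w) v x y ↔
        (μ v w * μ w v) * (μ x v * μ v y) = (μ v w * μ w v) * (μ x w * μ w y)) := by
    intro x y h h1 h2 h3 h4
    rw [mdetour_aux_main μ v w x y hvw h h1 h2 h3 h4,
      mdetour_aux_main μ w v x y hvw.symm h h2 h1 h4 h3]
    constructor <;> intro e <;> linarith
  constructor
  · intro hne
    obtain ⟨x, hx⟩ := Function.ne_iff.mp hne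
    obtain ⟨y, hy⟩ := Function.ne_iff.mp hx
    by_cases hc : x = y ∨ x = v ∨ x = w ∨ y = v ∨ y = w
    · exact absurd ((mdetour_aux_zero μ v w x y hc).trans
        (mdetour_aux_zero μ w v x y (by tauto)).symm) hy
    · simp only [not_or] at hc
      obtain ⟨h, h1, h2, h3, h4⟩ := hc
      rw [Ne, key x y h h1 h2 h3 h4] at hy
      refine ⟨fun h0 => hy (by rw [h0]; simp), x, y, h, h1, h2, h3, h4, fun e => hy (by rw [e])⟩
  · rintro ⟨h0, x, y, h, h1, h2, h3, h4, hn⟩ e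
    have := (key x y h h1 h2 h3 h4).mp (by rw [e])
    exact hn (mul_left_cancel₀ h0 this)
end

section
/- Let R be a commutative semiring with no zero divisors, V a type, and μ : V → V → R a matrix with zero diagonal. Suppose μ has no 2-cycles (for all x, y, μ x y = 0 or μ y x = 0) and no 3-cycles through v (for all x, y with x, y, v pairwise distinct, μ x v · μ v y · μ y x = 0). Then the detour μ↑v has no 2-cycles: for all x, y, (μ↑v) x y · (μ↑v) y x = 0. -/
/-- The detour of a weighted digraph `μ` (a matrix with zero diagonal over a
commutative semiring) at a vertex `v`. -/
def wdetour {R V : Type*} [CommSemiring R] [DecidableEq V]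
    (μ : V → V → R) (v : V) : V → V → R :=
  fun x y => if x = v ∨ y = v ∨ x = y then 0 else μ x y + μ x v * μ v y

/-- If `μ` (over a commutative semiring with no zero divisors) has no 2-cycles and no
3-cycles through `v`, then the detour `μ↑v` has no 2-cycles. -/
theorem detour_no_two_cycles {R V : Type*} [CommSemiring R] [NoZeroDivisors R]
    [DecidableEq V] (μ : V → V → R) (hdiag : ∀ x, μ x x = 0) (v : V)
    (h2 : ∀ x y, μ x y = 0 ∨ μ y x = 0)
    (h3 : ∀ x y, x ≠ y → x ≠ v → y ≠ v → μ x v * μ v y * μ y x = 0) :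
    ∀ x y, wdetour μ v x y * wdetour μ v y x = 0 := by
  intro x y
  unfold wdetour
  by_cases hx : x = v
  · simp [hx]
  by_cases hy : y = v
  · simp [hy]
  by_cases hxy : x = y
  · simp [hxy]
  have hyx : y ≠ x := fun h => hxy h.symm
  rw [if_neg (by tauto), if_neg (by tauto)]
  have e1 : μ x y * μ y x = 0 := by
    rcases h2 x y with h | h <;> simp [h]
  have e2 : μ x v * μ v x = 0 := by
    rcases h2 x v with h | h <;> simp [h]
  have e3 := h3 x y hxy hx hy
  have e4 := h3 y x hyx hy hx
  calc (μ x y + μ x v * μ v y) * (μ y x + μ y v * μ v x)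
      = μ x y * μ y x + μ y v * μ v x * μ x y + μ x v * μ v y * μ y x
        + (μ x v * μ v x) * (μ v y * μ y v) := by ring
    _ = 0 := by rw [e1, e2, e3, e4]; simp
end

section
/- Let R be a commutative semiring, V a type, μ : V → V → R a matrix with zero diagonal, and u, v, w ∈ V distinct. Then contracting {v,w} commutes with the detour at u: the matrices (μ↑u)/{v,w} and (μ/{v,w})↑u on V \ {w} are equal. -/
/-- The contraction `μ/{v,w}` of a weighted digraph at two distinct vertices `v, w`:
the matrix on `V \ {w}` obtained by identifying `w` with `v`, adding the
corresponding weights. -/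
def wcontract {R V : Type*} [CommSemiring R] [DecidableEq V]
    (μ : V → V → R) (v w : V) : {x : V // x ≠ w} → {x : V // x ≠ w} → R :=
  fun x y =>
    if x.val = v then
      if y.val = v then 0 else μ v y.val + μ w y.val
    else if y.val = v then μ x.val v + μ x.val w
    else μ x.val y.val

/-- Contracting `{v,w}` commutes with the detour at `u`:
`(μ↑u)/{v,w} = (μ/{v,w})↑u` as matrices on `V \ {w}`. -/
theorem wcontract_wdetour_comm {R V : Type*} [CommSemiring R] [DecidableEq V]
    (μ : V → V → R) (hdiag : ∀ x, μ x x = 0)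
    (u v w : V) (huv : u ≠ v) (hvw : v ≠ w) (huw : u ≠ w) :
    wcontract (wdetour μ u) v w = wdetour (wcontract μ v w) ⟨u, huw⟩ := by
  funext ⟨x, hx⟩ ⟨y, hy⟩
  simp only [wcontract, wdetour, Subtype.mk.injEq]
  by_cases hxv : x = v
  · by_cases hyv : y = v
    · simp [hxv, hyv]
    · by_cases hyu : y = u
      · simp [hxv, hyu, huv]
      · have h1 : ¬ v = y := fun h => hyv h.symm
        have h2 : ¬ w = y := fun h => hy h.symm
        simp only [hxv, hyv, hyu, h1, h2, huv, huv.symm, huw.symm, or_self, if_true, if_false]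
        ring
  · by_cases hyv : y = v
    · by_cases hxu : x = u
      · simp [hyv, hxu, huv]
      · simp only [hxv, hyv, hxu, hx, huv, huv.symm, huw.symm, or_self, if_true, if_false]
        ring
    · simp [hxv, hyv, huv]
end

section
/- Let R be a commutative semiring, V a type, and μ : V → V → R a matrix with zero diagonal. If v, w ∈ V satisfy μ v w · μ w v = 0, then the detours at v and w commute: (μ↑v)↑w = (μ↑w)↑v. -/
/-- If `μ v w · μ w v = 0`, then the detours at `v` and `w` commute:
`(μ↑v)↑w = (μ↑w)↑v`. -/
theorem wdetour_comm_of_no_two_cycle {R V : Type*} [CommSemiring R] [DecidableEq V]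
    (μ : V → V → R) (hdiag : ∀ x, μ x x = 0) (v w : V)
    (h : μ v w * μ w v = 0) :
    wdetour (wdetour μ v) w = wdetour (wdetour μ w) v := by
  funext x y
  by_cases hvw : v = w
  · subst hvw; rfl
  have hwv : w ≠ v := fun e => hvw e.symm
  by_cases hxy : x = y
  · simp [wdetour, hxy]
  by_cases hxv : x = v
  · subst hxv
    simp [wdetour]
  by_cases hxw : x = w
  · subst hxw
    simp [wdetour]
  by_cases hyv : y = v
  · subst hyv
    simp [wdetour]
  by_cases hyw : y = w
  · subst hyw
    simp [wdetour]
  have hwy : w ≠ y := fun e => hyw e.symm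
  have hvy : v ≠ y := fun e => hyv e.symm
  simp only [wdetour, hxy, hxv, hxw, hyv, hyw, hwy, hvy, hvw, hwv, or_self, if_false]
  have e1 : μ x v * μ v w * (μ w v * μ v y) = 0 := by
    calc _ = μ x v * μ v y * (μ v w * μ w v) := by ring
      _ = 0 := by rw [h, mul_zero]
  have e2 : μ x w * μ w v * (μ v w * μ w y) = 0 := by
    calc _ = μ x w * μ w y * (μ v w * μ w v) := by ring
      _ = 0 := by rw [h, mul_zero]
  simp only [mul_add, add_mul, e1, e2]
  ring
end

section
/- Let R be a commutative semiring, V a type, and μ : V → V → R a matrix with zero diagonal whose support digraph (the relation x → y iff μ x y ≠ 0) is acyclic (its transitive closure is irreflexive). Then for all distinct v, w ∈ V, (μ↑v)↑w = (μ↑w)↑v, and moreover for every v ∈ V the support digraph of the detour μ↑v is acyclic. -/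
/-- If the support digraph of `μ` (with `x → y` iff `μ x y ≠ 0`) is acyclic, then
detours commute pairwise and every detour again has acyclic support digraph. -/
theorem wdetour_acyclic {R V : Type*} [CommSemiring R] [DecidableEq V]
    (μ : V → V → R) (hdiag : ∀ x, μ x x = 0)
    (hacyc : Irreflexive (Relation.TransGen (fun x y => μ x y ≠ 0))) :
    (∀ v w : V, v ≠ w → wdetour (wdetour μ v) w = wdetour (wdetour μ w) v) ∧
      ∀ v : V, Irreflexive (Relation.TransGen (fun x y => wdetour μ v x y ≠ 0)) := by
  have hzero : ∀ v w : V, μ v w * μ w v = 0 := by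
    intro v w
    by_contra h
    have h1 : μ v w ≠ 0 := fun h' => h (by rw [h', zero_mul])
    have h2 : μ w v ≠ 0 := fun h' => h (by rw [h', mul_zero])
    exact hacyc v (Relation.TransGen.tail (Relation.TransGen.single h1) h2)
  refine ⟨?_, ?_⟩
  · intro v w hvw
    funext x y
    have hwv : w ≠ v := hvw.symm
    by_cases hxv : x = v
    · simp [wdetour, hxv, hvw]
    by_cases hyv : y = v
    · simp [wdetour, hyv, hvw]
    by_cases hxw : x = w
    · simp [wdetour, hxw, hwv]
    by_cases hyw : y = w
    · simp [wdetour, hyw, hwv]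
    by_cases hxy : x = y
    · simp [wdetour, hxy]
    have hyv' : ¬ v = y := fun h => hyv h.symm
    have hyw' : ¬ w = y := fun h => hyw h.symm
    simp only [wdetour, hxv, hyv, hxw, hyw, hxy, hvw, hwv, hyv', hyw', or_self, if_false]
    have e1 : (μ x w + μ x v * μ v w) * (μ w y + μ w v * μ v y) =
        μ x w * μ w y + μ x w * μ w v * μ v y + μ x v * μ v w * μ w y
          + μ x v * μ v y * (μ v w * μ w v) := by ring
    have e2 : (μ x v + μ x w * μ w v) * (μ v y + μ v w * μ w y) =
        μ x v * μ v y + μ x w * μ w v * μ v y + μ x v * μ v w * μ w y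
          + μ x w * μ w y * (μ v w * μ w v) := by ring
    rw [e1, e2, hzero v w]
    ring
  · intro v x hx
    refine hacyc x (Relation.TransGen.trans_induction_on
      (motive := fun {a b} _ => Relation.TransGen (fun x y => μ x y ≠ 0) a b) hx ?_ ?_)
    · intro a b hab
      by_cases h : μ a b = 0
      · have h3 : μ a v * μ v b ≠ 0 := by
          intro h'
          apply hab
          simp [wdetour, h, h']
        exact Relation.TransGen.tail
          (Relation.TransGen.single (left_ne_zero_of_mul h3)) (right_ne_zero_of_mul h3)
      · exact Relation.TransGen.single h
    · intro a b c _ _ h1 h2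
      exact h1.trans h2
end
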